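/- arXiv:1111.2138 — 7 statements merged into one kernel-verified Lean document; each statement's English description precedes it below -/
import Mathlib

section
/- Let T be a nonnegative tensor of order m ≥ 2 and dimension n ≥ 2. Then T is strictly nonnegative if and only if the vector R(T), whose i-th component is Σ_{i_2,…,i_m=1}^n T_{i i_2…i_m}, has all components positive. -/
open Finset

/-- `(T x^{m-1})_i` for an order-`(k+1)` tensor encoded by its first index
and the `k` trailing indices (so for an order-`m` tensor, `k = m - 1`). -/
def tapp {ι : Type*} [Fintype ι] {k : ℕ} (T : ι → (Fin k → ι) → ℝ) (x : ι → ℝ) (i : ι) : ℝ :=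
  ∑ β : Fin k → ι, T i β * ∏ l, x (β l)

/-- All entries of the tensor are nonnegative. -/
def TNonneg {ι : Type*} {k : ℕ} (T : ι → (Fin k → ι) → ℝ) : Prop :=
  ∀ i β, 0 ≤ T i β

/-- `T` is strictly nonnegative: nonnegative, and `T x^{m-1} > 0` whenever `x > 0`. -/
def TStrictlyNonneg {ι : Type*} [Fintype ι] {k : ℕ} (T : ι → (Fin k → ι) → ℝ) : Prop :=
  TNonneg T ∧ ∀ x : ι → ℝ, (∀ i, 0 < x i) → ∀ i, 0 < tapp T x i

/-- Representation matrix `G(T)`: `G(T)_{ij}` is the sum of all `T_{i i₂…i_m}` with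
`j ∈ {i₂,…,i_m}`. -/
def repMat {ι : Type*} [Fintype ι] [DecidableEq ι] {k : ℕ}
    (T : ι → (Fin k → ι) → ℝ) : Matrix ι ι ℝ :=
  fun i j => ∑ β : Fin k → ι, if ∃ l, β l = j then T i β else 0

/-- Majorization matrix `M(T)`: `M(T)_{ij} = T_{i j j … j}`. -/
def majMat {ι : Type*} {k : ℕ} (T : ι → (Fin k → ι) → ℝ) : Matrix ι ι ℝ :=
  fun i j => T i (fun _ => j)

/-- A square matrix is reducible if some nonempty proper index subset `I` satisfies
`A i j = 0` for all `i ∈ I`, `j ∉ I`. -/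
def MatReducible {ι : Type*} [Fintype ι] (A : Matrix ι ι ℝ) : Prop :=
  ∃ I : Finset ι, I.Nonempty ∧ I ≠ Finset.univ ∧ ∀ i ∈ I, ∀ j ∉ I, A i j = 0

def MatIrreducible {ι : Type*} [Fintype ι] (A : Matrix ι ι ℝ) : Prop :=
  ¬ MatReducible A

/-- A square nonnegative matrix is primitive if some positive power is entrywise positive. -/
def MatPrimitive {ι : Type*} [Fintype ι] [DecidableEq ι] (A : Matrix ι ι ℝ) : Prop :=
  ∃ p : ℕ, 0 < p ∧ ∀ i j, 0 < (A ^ p) i j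

/-- `lam ∈ ℂ` is an eigenvalue of `T`:
`(T x^{m-1})_i = lam * x_i^{m-1}` for some nonzero `x ∈ ℂⁿ`. -/
def TIsEig {ι : Type*} [Fintype ι] {k : ℕ} (T : ι → (Fin k → ι) → ℝ) (lam : ℂ) : Prop :=
  ∃ x : ι → ℂ, x ≠ 0 ∧
    ∀ i, (∑ β : Fin k → ι, (T i β : ℂ) * ∏ l, x (β l)) = lam * x i ^ k

/-- Spectral radius: the supremum of moduli of eigenvalues. -/
noncomputable def specRad {ι : Type*} [Fintype ι] {k : ℕ}
    (T : ι → (Fin k → ι) → ℝ) : ℝ :=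
  sSup {r : ℝ | ∃ lam : ℂ, TIsEig T lam ∧ r = ‖lam‖}

/-- Induced tensor `T_I` on a subset `I` of the index set. -/
def inducedT {ι : Type*} {k : ℕ} (T : ι → (Fin k → ι) → ℝ) (I : Finset ι) :
    {i // i ∈ I} → (Fin k → {i // i ∈ I}) → ℝ :=
  fun i β => T i.val (fun l => (β l).val)

/-- The identity tensor: `E_{i₁…i_m} = 1` if all indices coincide, `0` otherwise. -/
def idT (ι : Type*) [DecidableEq ι] (k : ℕ) : ι → (Fin k → ι) → ℝ :=
  fun i β => if ∀ l, β l = i then 1 else 0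

/-- A tensor is reducible if some nonempty proper index subset `I` satisfies
`T_{i₁ i₂ … i_m} = 0` for all `i₁ ∈ I` and `i₂, …, i_m ∉ I`. -/
def TReducible {ι : Type*} [Fintype ι] {k : ℕ} (T : ι → (Fin k → ι) → ℝ) : Prop :=
  ∃ I : Finset ι, I.Nonempty ∧ I ≠ Finset.univ ∧
    ∀ i ∈ I, ∀ β : Fin k → ι, (∀ l, β l ∉ I) → T i β = 0

/-- The map `F_T(x)_i = ((T x^{m-1})_i)^{1/(m-1)}` (here `k = m - 1`). -/
noncomputable def FT {ι : Type*} [Fintype ι] {k : ℕ}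
    (T : ι → (Fin k → ι) → ℝ) (x : ι → ℝ) : ι → ℝ :=
  fun i => (tapp T x i) ^ ((k : ℝ)⁻¹)

/-- A tensor is primitive if some iterate of `F_T` is entrywise positive on every
nonzero nonnegative vector. -/
def TPrimitive {ι : Type*} [Fintype ι] {k : ℕ} (T : ι → (Fin k → ι) → ℝ) : Prop :=
  ∃ p : ℕ, 0 < p ∧ ∀ x : ι → ℝ, (∀ i, 0 ≤ x i) → x ≠ 0 → ∀ i, 0 < (FT T)^[p] x i

/-- `T` is weakly positive: all off-diagonal entries of `M(T)` are positive. -/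
def TWeaklyPositive {ι : Type*} {k : ℕ} (T : ι → (Fin k → ι) → ℝ) : Prop :=
  ∀ i j, i ≠ j → 0 < T i (fun _ => j)

/-- `T` is essentially positive: `T x^{m-1} > 0` for every nonzero `x ≥ 0`. -/
def TEssentiallyPositive {ι : Type*} [Fintype ι] {k : ℕ} (T : ι → (Fin k → ι) → ℝ) : Prop :=
  ∀ x : ι → ℝ, (∀ i, 0 ≤ x i) → x ≠ 0 → ∀ i, 0 < tapp T x i

/-- Hilbert's projective metric between two positive vectors:
`d(u,v) = log (max_i v_i/u_i) - log (min_i v_i/u_i)`. -/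
noncomputable def hilbertD {n : ℕ} (hn : 0 < n) (u v : Fin n → ℝ) : ℝ :=
  Real.log ((Finset.univ : Finset (Fin n)).sup' ⟨⟨0, hn⟩, Finset.mem_univ _⟩
      (fun i => v i / u i)) -
  Real.log ((Finset.univ : Finset (Fin n)).inf' ⟨⟨0, hn⟩, Finset.mem_univ _⟩
      (fun i => v i / u i))

theorem sum_mul_pos_iff_of_pos_right {α R : Type*} [Semiring R] [PartialOrder R]
    [IsStrictOrderedRing R] {s : Finset α} {f w : α → R}
    (hf : ∀ a ∈ s, 0 ≤ f a) (hw : ∀ a ∈ s, 0 < w a) :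
    0 < ∑ a ∈ s, f a * w a ↔ 0 < ∑ a ∈ s, f a := by
  have hfw : ∀ a ∈ s, 0 ≤ f a * w a := fun a ha => mul_nonneg (hf a ha) (hw a ha).le
  rw [sum_pos_iff_of_nonneg hfw, sum_pos_iff_of_nonneg hf]
  exact exists_congr fun a => and_congr_right fun ha =>
    ⟨fun h => (hf a ha).lt_of_ne' (left_ne_zero_of_mul h.ne'), fun h => mul_pos h (hw a ha)⟩

theorem tapp_pos_iff_row_sum_pos {ι : Type*} [Fintype ι] {k : ℕ} {T : ι → (Fin k → ι) → ℝ}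
    {x : ι → ℝ} {i : ι} (hT : ∀ β, 0 ≤ T i β) (hx : ∀ j, 0 < x j) :
    0 < tapp T x i ↔ 0 < ∑ β, T i β :=
  sum_mul_pos_iff_of_pos_right (fun β _ => hT β) fun β _ => prod_pos fun l _ => hx (β l)

theorem strictly_nonneg_iff_row_sums_positive_general {ι : Type*} [Fintype ι] {k : ℕ}
    (T : ι → (Fin k → ι) → ℝ) :
    TStrictlyNonneg T ↔ TNonneg T ∧ ∀ i, 0 < ∑ β, T i β := by
  refine and_congr_right fun hT => ⟨fun h i => ?_, fun h x hx i => ?_⟩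
  · have ones_pos : ∀ j : ι, 0 < (1 : ι → ℝ) j := fun _ => one_pos
    exact (tapp_pos_iff_row_sum_pos (hT i) ones_pos).1 (h 1 ones_pos i)
  · exact (tapp_pos_iff_row_sum_pos (hT i) hx).2 (h i)

theorem strictly_nonneg_iff_row_sums_positive
    (m n : ℕ) (hm : 2 ≤ m) (hn : 2 ≤ n)
    (T : Fin n → (Fin (m - 1) → Fin n) → ℝ) (hT : TNonneg T) :
    TStrictlyNonneg T ↔ ∀ i, 0 < ∑ β : Fin (m - 1) → Fin n, T i β := by
  rw [strictly_nonneg_iff_row_sums_positive_general, and_iff_right hT]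
end

section
/- Let T be a nonnegative tensor of order m ≥ 2 and dimension n ≥ 2. Then T is strictly nonnegative if and only if for all vectors x, y ∈ ℝ^n with y ≥ 0 componentwise and x_i > y_i for every i, one has (T x^{m-1})_i > (T y^{m-1})_i for every i. -/
open Finset

/-!
If `T x^{m-1} > 0` for one nonnegative `x`, such as the all-ones vector, then every row of `T` has
a positive entry. A nonempty product is strictly monotone on nonnegative factors, even where some
of them vanish, so the term of that entry increases strictly and no other term decreases.
Conversely, strict increase from `y = 0` gives `T x^{m-1} > T 0^{m-1} ≥ 0` for `x > 0`.
-/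

theorem prod_lt_prod_of_nonneg_of_lt {ι R : Type*} [CommMonoidWithZero R] [PartialOrder R]
    [ZeroLEOneClass R] [PosMulStrictMono R] {s : Finset ι} {f g : ι → R} (hs : s.Nonempty)
    (hf : ∀ i ∈ s, 0 ≤ f i) (hfg : ∀ i ∈ s, f i < g i) :
    ∏ i ∈ s, f i < ∏ i ∈ s, g i := by
  induction hs using Finset.Nonempty.cons_induction with
  | singleton a => simpa using hfg
  | cons a s ha _ ih =>
    have := posMulStrictMono_iff_mulPosStrictMono.1 ‹PosMulStrictMono R›
    simp only [mem_cons, forall_eq_or_imp] at hf hfg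
    simp only [prod_cons]
    exact mul_lt_mul'' hfg.1 (ih hf.2 hfg.2) hf.1 (prod_nonneg hf.2)

section Tensor

variable {ι : Type*} [Fintype ι] {k : ℕ} {T : ι → (Fin k → ι) → ℝ}

theorem tapp_nonneg {x : ι → ℝ} {i : ι} (hT : ∀ β, 0 ≤ T i β) (hx : ∀ j, 0 ≤ x j) :
    0 ≤ tapp T x i :=
  sum_nonneg fun β _ => mul_nonneg (hT β) (prod_nonneg fun l _ => hx (β l))

theorem exists_pos_of_tapp_pos {x : ι → ℝ} {i : ι} (hx : ∀ j, 0 ≤ x j)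
    (h : 0 < tapp T x i) : ∃ β, 0 < T i β := by
  contrapose! h
  exact sum_nonpos fun β _ =>
    mul_nonpos_of_nonpos_of_nonneg (h β) (prod_nonneg fun l _ => hx (β l))

theorem TStrictlyNonneg.exists_pos (hT : TStrictlyNonneg T) (i : ι) : ∃ β, 0 < T i β :=
  exists_pos_of_tapp_pos (fun _ => zero_le_one) (hT.2 1 (fun _ => one_pos) i)

theorem tapp_lt_tapp {x y : ι → ℝ} {i : ι} (hk : k ≠ 0) (hT : ∀ β, 0 ≤ T i β)
    (hpos : ∃ β, 0 < T i β) (hy : ∀ j, 0 ≤ y j) (hyx : ∀ j, y j < x j) :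
    tapp T y i < tapp T x i := by
  have : NeZero k := ⟨hk⟩
  have hprod (β : Fin k → ι) : ∏ l, y (β l) < ∏ l, x (β l) :=
    prod_lt_prod_of_nonneg_of_lt univ_nonempty (fun l _ => hy (β l)) fun l _ => hyx (β l)
  obtain ⟨β, hβ⟩ := hpos
  exact sum_lt_sum (fun γ _ => mul_le_mul_of_nonneg_left (hprod γ).le (hT γ))
    ⟨β, mem_univ β, mul_lt_mul_of_pos_left (hprod β) hβ⟩

theorem strictly_nonneg_iff_strictly_increasing_general (hk : k ≠ 0) (hT : TNonneg T) :
    TStrictlyNonneg T ↔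
      ∀ x y : ι → ℝ, (∀ i, 0 ≤ y i) → (∀ i, y i < x i) → ∀ i, tapp T y i < tapp T x i := by
  constructor
  · intro hpos x y hy hyx i
    exact tapp_lt_tapp hk (hT i) (hpos.exists_pos i) hy hyx
  · refine fun hmono => ⟨hT, fun x hx i => ?_⟩
    calc
      0 ≤ tapp T 0 i := tapp_nonneg (hT i) fun _ => le_rfl
      _ < tapp T x i := hmono x 0 (fun _ => le_rfl) hx i

end Tensor

theorem strictly_nonneg_iff_strictly_increasing
    (m n : ℕ) (hm : 2 ≤ m) (hn : 2 ≤ n)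
    (T : Fin n → (Fin (m - 1) → Fin n) → ℝ) (hT : TNonneg T) :
    TStrictlyNonneg T ↔
      ∀ x y : Fin n → ℝ, (∀ i, 0 ≤ y i) → (∀ i, y i < x i) →
        ∀ i, tapp T y i < tapp T x i :=
  strictly_nonneg_iff_strictly_increasing_general (by lia) hT
end

section
/- Every weakly irreducible nonnegative tensor of order m ≥ 2 and dimension n ≥ 2 is strictly nonnegative. -/
open Finset

section

variable {ι : Type*} [Fintype ι] {k : ℕ} {T : ι → (Fin k → ι) → ℝ} {i : ι}

theorem tapp_pos_iff {x : ι → ℝ} (hT : 0 ≤ T i) (hx : ∀ j, 0 < x j) :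
    0 < tapp T x i ↔ T i ≠ 0 := by
  have monomial_pos (β : Fin k → ι) : 0 < ∏ l, x (β l) := prod_pos fun l _ => hx (β l)
  have term_nonneg (β : Fin k → ι) : 0 ≤ T i β * ∏ l, x (β l) :=
    mul_nonneg (hT β) (monomial_pos β).le
  calc
    0 < tapp T x i ↔ ∃ β, 0 < T i β * ∏ l, x (β l) := by
      simp only [tapp, sum_pos_iff_of_nonneg fun β _ => term_nonneg β, mem_univ, true_and]
    _ ↔ ∃ β, T i β ≠ 0 := exists_congr fun β =>
      (mul_pos_iff_of_pos_right (monomial_pos β)).trans (hT β).lt_iff_ne'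
    _ ↔ T i ≠ 0 := Function.ne_iff.symm

theorem repMat_row_eq_zero [DecidableEq ι] (hT : T i = 0) : repMat T i = 0 := by
  ext j
  simp [repMat, hT]

theorem MatIrreducible.row_ne_zero [Nontrivial ι] {A : Matrix ι ι ℝ} (hA : MatIrreducible A)
    (i : ι) : A i ≠ 0 := by
  intro hi
  refine hA ⟨{i}, singleton_nonempty i, singleton_ne_univ i, fun a ha j _ => ?_⟩
  rw [mem_singleton.mp ha, hi, Pi.zero_apply]

theorem weakly_irreducible_is_strictly_nonneg_general [DecidableEq ι] [Nontrivial ι]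
    (hT : TNonneg T) (hwi : MatIrreducible (repMat T)) : TStrictlyNonneg T := by
  refine ⟨hT, fun x hx i => (tapp_pos_iff (hT i) hx).mpr fun hi => ?_⟩
  exact hwi.row_ne_zero i (repMat_row_eq_zero hi)

end

theorem weakly_irreducible_is_strictly_nonneg
    (m n : ℕ) (hm : 2 ≤ m) (hn : 2 ≤ n)
    (T : Fin n → (Fin (m - 1) → Fin n) → ℝ) (hT : TNonneg T)
    (hwi : MatIrreducible (repMat T)) :
    TStrictlyNonneg T := by
  have : Nontrivial (Fin n) := Fin.nontrivial_iff_two_le.mpr hn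
  exact weakly_irreducible_is_strictly_nonneg_general hT hwi
end

section
/- Let T be a nonnegative tensor of order m ≥ 2 and dimension n ≥ 2 and let E be the identity tensor of the same order and dimension. Then T is weakly positive if and only if T + E is essentially positive. -/
open Finset

/-!
For a nonnegative tensor `S`, keeping only the term with trailing indices `j, …, j` gives
`(S x^{m-1})_i ≥ M(S)_{ij} x_j^{m-1}` on the nonnegative orthant, with equality at the `j`-th basis
vector, so `S` is essentially positive iff every entry of `M(S)` is positive. As `M(T + E)` is
`M(T)` plus the identity matrix, adding `E` only makes the diagonal of `M(T)` positive.
-/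

section Majorization

variable {ι : Type*} {k : ℕ} {S T : ι → (Fin k → ι) → ℝ}

theorem TNonneg.add (hS : TNonneg S) (hT : TNonneg T) : TNonneg (S + T) :=
  fun i β => add_nonneg (hS i β) (hT i β)

theorem tNonneg_idT [DecidableEq ι] : TNonneg (idT ι k) := fun i β => by
  unfold idT
  split_ifs <;> norm_num

theorem majMat_add (S T : ι → (Fin k → ι) → ℝ) : majMat (S + T) = majMat S + majMat T :=
  rfl

theorem majMat_idT [DecidableEq ι] (hk : k ≠ 0) : majMat (idT ι k) = 1 := by
  have : NeZero k := ⟨hk⟩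
  ext i j
  simp only [majMat, idT, forall_const, Matrix.one_apply, eq_comm]

theorem TNonneg.tWeaklyPositive_iff_majMat_add_one_pos [DecidableEq ι] (hT : TNonneg T) :
    TWeaklyPositive T ↔ ∀ i j, 0 < (majMat T + 1) i j := by
  refine forall₂_congr fun i j => ?_
  obtain rfl | hij := eq_or_ne i j
  · have diag_pos : 0 < majMat T i i + 1 := add_pos_of_nonneg_of_pos (hT i _) one_pos
    simpa only [ne_eq, not_true_eq_false, false_imp_iff, Matrix.add_apply, Matrix.one_apply_eq,
      true_iff] using diag_pos
  · simp only [ne_eq, hij, not_false_eq_true, true_imp_iff, Matrix.add_apply,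
      Matrix.one_apply_ne hij, add_zero, majMat]

variable [Fintype ι]

theorem tapp_single_one [DecidableEq ι] (T : ι → (Fin k → ι) → ℝ) (i j : ι) :
    tapp T (Pi.single j 1) i = majMat T i j := by
  have prod_single (β : Fin k → ι) :
      ∏ l, (Pi.single j 1 : ι → ℝ) (β l) = if β = fun _ => j then 1 else 0 := by
    simp only [Pi.single_apply, Finset.prod_ite_zero, Finset.mem_univ, true_imp_iff,
      Finset.prod_const_one, funext_iff]
  simp only [tapp, prod_single, mul_ite, mul_one, mul_zero, Finset.sum_ite_eq',
    Finset.mem_univ, if_true, majMat]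

theorem TNonneg.majMat_mul_pow_le_tapp (hT : TNonneg T) {x : ι → ℝ} (hx : ∀ i, 0 ≤ x i)
    (i j : ι) : majMat T i j * x j ^ k ≤ tapp T x i := by
  have term_nonneg (β : Fin k → ι) : 0 ≤ T i β * ∏ l, x (β l) :=
    mul_nonneg (hT i β) (Finset.prod_nonneg fun l _ => hx (β l))
  calc majMat T i j * x j ^ k = T i (fun _ => j) * ∏ _l : Fin k, x j := by
        rw [Fin.prod_const, majMat]
    _ ≤ tapp T x i :=
        Finset.single_le_sum (fun β _ => term_nonneg β) (Finset.mem_univ fun _ => j)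

theorem TEssentiallyPositive.majMat_pos (hT : TEssentiallyPositive T) (i j : ι) :
    0 < majMat T i j := by
  classical
  have single_nonneg : 0 ≤ (Pi.single j 1 : ι → ℝ) := Pi.single_nonneg.mpr zero_le_one
  have single_ne_zero : (Pi.single j 1 : ι → ℝ) ≠ 0 := Pi.single_ne_zero_iff.mpr one_ne_zero
  exact tapp_single_one T i j ▸ hT _ single_nonneg single_ne_zero i

theorem TNonneg.tEssentiallyPositive_iff_majMat_pos (hT : TNonneg T) :
    TEssentiallyPositive T ↔ ∀ i j, 0 < majMat T i j := by
  refine ⟨TEssentiallyPositive.majMat_pos, fun hM x hx hx_ne i => ?_⟩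
  obtain ⟨j, hj⟩ := Function.ne_iff.mp hx_ne
  have hxj : 0 < x j := (hx j).lt_of_ne' hj
  exact (mul_pos (hM i j) (pow_pos hxj k)).trans_le (hT.majMat_mul_pow_le_tapp hx i j)

end Majorization

theorem weakly_positive_iff_add_id_essentially_positive_general {ι : Type*} [Fintype ι]
    [DecidableEq ι] {k : ℕ} (hk : k ≠ 0) {T : ι → (Fin k → ι) → ℝ} (hT : TNonneg T) :
    TWeaklyPositive T ↔ TEssentiallyPositive (T + idT ι k) := by
  rw [hT.tWeaklyPositive_iff_majMat_add_one_pos,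
    (hT.add tNonneg_idT).tEssentiallyPositive_iff_majMat_pos, majMat_add, majMat_idT hk]

theorem weakly_positive_iff_add_id_essentially_positive
    (m n : ℕ) (hm : 2 ≤ m) (hn : 2 ≤ n)
    (T : Fin n → (Fin (m - 1) → Fin n) → ℝ) (hT : TNonneg T) :
    TWeaklyPositive T ↔
      TEssentiallyPositive (fun i β => T i β + idT (Fin n) (m - 1) i β) :=
  weakly_positive_iff_add_id_essentially_positive_general (by omega) hT
end

section
/- Let T be a nonnegative tensor of order m ≥ 2 and dimension n ≥ 2. If T is a primitive tensor, then its representation matrix G(T) is a primitive matrix; in particular, every primitive nonnegative tensor is weakly primitive. -/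
open Finset

/-!
If `F_T(x)_i ≠ 0`, then some entry `T_{i i₂ … i_m}` is nonzero with every `x_{i_l} ≠ 0`, and this
entry contributes to `G(T)_{i i_l}`. So the support of `F_T(x)` is reached from the support of `x`
along edges of the graph of `G(T)`, and the support of `F_T^q(e_j)` lies in that of column `j`
of `G(T)^q`. The same exponent therefore witnesses the primitivity of `T` and that of `G(T)`.
-/

theorem matrix_mul_apply_pos {l m n R : Type*} [Fintype m] [NonUnitalNonAssocSemiring R]
    [PartialOrder R] [IsOrderedCancelAddMonoid R] [PosMulStrictMono R]
    {A : Matrix l m R} {B : Matrix m n R} (hA : ∀ i j, 0 ≤ A i j) (hB : ∀ j k, 0 ≤ B j k)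
    {i : l} {j : m} {k : n} (hij : 0 < A i j) (hjk : 0 < B j k) : 0 < (A * B) i k := by
  rw [Matrix.mul_apply]
  exact Finset.sum_pos' (fun a _ => mul_nonneg (hA i a) (hB a k))
    ⟨j, Finset.mem_univ j, mul_pos hij hjk⟩

section

variable {ι : Type*} [Fintype ι] {k : ℕ} {T : ι → (Fin k → ι) → ℝ} {x : ι → ℝ} {i : ι}

theorem exists_entry_ne_zero_of_tapp_ne_zero (h : tapp T x i ≠ 0) :
    ∃ β, T i β ≠ 0 ∧ ∀ l, x (β l) ≠ 0 := by
  obtain ⟨β, -, hβ⟩ := Finset.exists_ne_zero_of_sum_ne_zero h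
  exact ⟨β, left_ne_zero_of_mul hβ,
    fun l => Finset.prod_ne_zero_iff.mp (right_ne_zero_of_mul hβ) l (Finset.mem_univ l)⟩

theorem tapp_ne_zero_of_FT_ne_zero [NeZero k] (h : FT T x i ≠ 0) : tapp T x i ≠ 0 := by
  contrapose! h
  rw [FT, h, Real.zero_rpow (inv_ne_zero (NeZero.ne _))]

variable [DecidableEq ι]

theorem repMat_nonneg (hT : TNonneg T) (i j : ι) : 0 ≤ repMat T i j :=
  Finset.sum_nonneg fun β _ => ite_nonneg (hT i β) le_rfl

theorem repMat_pos_of_entry_pos (hT : TNonneg T) {β : Fin k → ι} (hβ : 0 < T i β) (l : Fin k) :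
    0 < repMat T i (β l) :=
  Finset.sum_pos' (fun γ _ => ite_nonneg (hT i γ) le_rfl)
    ⟨β, Finset.mem_univ β, by rwa [if_pos ⟨l, rfl⟩]⟩

theorem exists_repMat_pos_of_FT_ne_zero [NeZero k] (hT : TNonneg T) (h : FT T x i ≠ 0) :
    ∃ j, 0 < repMat T i j ∧ x j ≠ 0 := by
  obtain ⟨β, hTβ, hxβ⟩ := exists_entry_ne_zero_of_tapp_ne_zero (tapp_ne_zero_of_FT_ne_zero h)
  exact ⟨β 0, repMat_pos_of_entry_pos hT ((hT i β).lt_of_ne' hTβ) 0, hxβ 0⟩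

theorem exists_repMat_pow_pos_of_iterate_FT_ne_zero [NeZero k] (hT : TNonneg T) {q : ℕ}
    (h : (FT T)^[q] x i ≠ 0) : ∃ j, 0 < (repMat T ^ q) i j ∧ x j ≠ 0 := by
  induction q generalizing i with
  | zero => exact ⟨i, by simp, h⟩
  | succ q ih =>
    rw [Function.iterate_succ_apply'] at h
    obtain ⟨a, hia, ha⟩ := exists_repMat_pos_of_FT_ne_zero hT h
    obtain ⟨j, haj, hj⟩ := ih ha
    have hG := repMat_nonneg hT
    rw [pow_succ']
    exact ⟨j, matrix_mul_apply_pos hG (Matrix.pow_apply_nonneg hG q) hia haj, hj⟩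

theorem repMat_pow_pos_of_iterate_FT_single_ne_zero [NeZero k] (hT : TNonneg T) {q : ℕ} {j : ι}
    (h : (FT T)^[q] (Pi.single j 1) i ≠ 0) : 0 < (repMat T ^ q) i j := by
  obtain ⟨a, hia, ha⟩ := exists_repMat_pow_pos_of_iterate_FT_ne_zero hT h
  obtain rfl : a = j := by
    by_contra haj
    exact ha (Pi.single_eq_of_ne haj 1)
  exact hia

theorem tensor_primitive_imp_representation_primitive_general [NeZero k] (hT : TNonneg T)
    (hP : TPrimitive T) : MatPrimitive (repMat T) := by
  obtain ⟨p, hp, hpos⟩ := hP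
  refine ⟨p, hp, fun i j => repMat_pow_pos_of_iterate_FT_single_ne_zero hT ?_⟩
  have single_nonneg : 0 ≤ (Pi.single j 1 : ι → ℝ) := Pi.single_nonneg.mpr zero_le_one
  have single_ne_zero : (Pi.single j 1 : ι → ℝ) ≠ 0 := Pi.single_ne_zero_iff.mpr one_ne_zero
  exact (hpos (Pi.single j 1) single_nonneg single_ne_zero i).ne'

end

theorem tensor_primitive_imp_representation_primitive
    (m n : ℕ) (hm : 2 ≤ m) (hn : 2 ≤ n)
    (T : Fin n → (Fin (m - 1) → Fin n) → ℝ) (hT : TNonneg T)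
    (hP : TPrimitive T) :
    MatPrimitive (repMat T) := by
  have : NeZero (m - 1) := ⟨by lia⟩
  exact tensor_primitive_imp_representation_primitive_general hT hP
end

section
/- Every irreducible nonnegative tensor of order m ≥ 2 and dimension n ≥ 2 is weakly irreducible. -/
open Finset

section RepresentationMatrix

variable {ι : Type*} [Fintype ι] [DecidableEq ι] {k : ℕ} {T : ι → (Fin k → ι) → ℝ}

theorem TNonneg.le_repMat (hT : TNonneg T) (i : ι) (β : Fin k → ι) (l : Fin k) :
    T i β ≤ repMat T i (β l) := by
  have summand_nonneg (γ : Fin k → ι) : 0 ≤ if ∃ l', γ l' = β l then T i γ else 0 :=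
    ite_nonneg (hT i γ) le_rfl
  calc T i β = if ∃ l', β l' = β l then T i β else 0 := (if_pos ⟨l, rfl⟩).symm
    _ ≤ repMat T i (β l) := single_le_sum (fun γ _ => summand_nonneg γ) (mem_univ β)

theorem irreducible_imp_weakly_irreducible_general [NeZero k] (hT : TNonneg T)
    (hirr : ¬ TReducible T) : MatIrreducible (repMat T) := by
  rintro ⟨I, hI_nonempty, hI_ne_univ, hzero⟩
  refine hirr ⟨I, hI_nonempty, hI_ne_univ, fun i hi β hβ => le_antisymm ?_ (hT i β)⟩
  calc T i β ≤ repMat T i (β 0) := hT.le_repMat i β 0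
    _ = 0 := hzero i hi (β 0) (hβ 0)

end RepresentationMatrix

theorem irreducible_imp_weakly_irreducible
    (m n : ℕ) (hm : 2 ≤ m) (hn : 2 ≤ n)
    (T : Fin n → (Fin (m - 1) → Fin n) → ℝ) (hT : TNonneg T)
    (hirr : ¬ TReducible T) :
    MatIrreducible (repMat T) := by
  have : NeZero (m - 1) := ⟨by omega⟩
  exact irreducible_imp_weakly_irreducible_general hT hirr
end

section
/- Let T be a weakly irreducible nonnegative tensor of order m ≥ 2 and dimension n ≥ 2. Then there exist λ ∈ ℝ and a vector x ∈ ℝ^n with all components positive such that (T x^{m-1})_i = λ x_i^{m-1} for all i; moreover, this positive eigenpair is unique up to scaling of the eigenvector: if (μ, y) is any other pair with y having all components positive and (T y^{m-1})_i = μ y_i^{m-1} for all i, then μ = λ and y = c x for some constant c > 0. -/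
open Finset

/-! Call a positive `x` with `T x^{m-1} ≤ μ x^{m-1}` a supersolution at level `μ`. Normalize the
supersolutions at a given level to have smallest coordinate `1`, attained at a fixed index: no
positive entry of `T` leaves the set of indices at which they are uniformly bounded, so weak
irreducibility makes that set everything. By compactness there is a least level `λ` admitting a
supersolution (the Collatz–Wielandt value). A supersolution at level `λ` is an eigenvector:
otherwise, decreasing it slightly at the indices where the inequality is strict makes further
inequalities strict, until all of them are, and then `λ` could be lowered. For uniqueness, scale
the eigenvector `x` until it touches a second eigenvector `y` from below: comparing at a touching
index gives `λ ≤ μ`, with equality by symmetry, and if `c x ≠ y`, weak irreducibility yields a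
touching index at which the comparison is strict. -/

lemma exists_smul_le_touching {ι 𝕜 : Type*} [Finite ι] [Nonempty ι] [Field 𝕜] [LinearOrder 𝕜]
    [IsStrictOrderedRing 𝕜] {x y : ι → 𝕜} (hx : ∀ i, 0 < x i) (hy : ∀ i, 0 < y i) :
    ∃ c : 𝕜, 0 < c ∧ c • x ≤ y ∧ ∃ i, (c • x) i = y i := by
  obtain ⟨i, hi⟩ := Finite.exists_min fun i => y i / x i
  exact ⟨y i / x i, div_pos (hy i) (hx i), fun j => (le_div_iff₀ (hx j)).1 (hi j), i,
    div_mul_cancel₀ (y i) (hx i).ne'⟩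

section Tensor

variable {ι : Type*} [Fintype ι] {k : ℕ} {T : ι → (Fin k → ι) → ℝ} {x y : ι → ℝ}

lemma tapp_smul (T : ι → (Fin k → ι) → ℝ) (c : ℝ) (x : ι → ℝ) :
    tapp T (c • x) = c ^ k • tapp T x := by
  funext i
  simp only [tapp, Pi.smul_apply, smul_eq_mul, Finset.mul_sum, Finset.prod_mul_distrib,
    Finset.prod_const, Finset.card_univ, Fintype.card_fin]
  exact Finset.sum_congr rfl fun β _ => mul_left_comm _ _ _

lemma continuous_tapp (T : ι → (Fin k → ι) → ℝ) : Continuous (tapp T) := by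
  unfold tapp
  fun_prop

lemma tapp_mono (hT : TNonneg T) (hx : 0 ≤ x) (hxy : x ≤ y) : tapp T x ≤ tapp T y :=
  fun i => Finset.sum_le_sum fun β _ => mul_le_mul_of_nonneg_left
    (Finset.prod_le_prod (fun l _ => hx (β l)) fun l _ => hxy (β l)) (hT i β)

lemma tapp_lt_tapp_s13 (hT : TNonneg T) (hx : ∀ i, 0 < x i) (hxy : x ≤ y) {i : ι}
    {β : Fin k → ι} (hβ : 0 < T i β) {l : Fin k} (hl : x (β l) < y (β l)) :
    tapp T x i < tapp T y i := by
  refine Finset.sum_lt_sum (fun γ _ => mul_le_mul_of_nonneg_left ?_ (hT i γ))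
    ⟨β, Finset.mem_univ β, mul_lt_mul_of_pos_left ?_ hβ⟩
  · exact Finset.prod_le_prod (fun l _ => (hx (γ l)).le) fun l _ => hxy (γ l)
  · exact Finset.prod_lt_prod (fun l _ => hx (β l)) (fun l _ => hxy (β l))
      ⟨l, Finset.mem_univ l, hl⟩

lemma mul_prod_le_tapp (hT : TNonneg T) (hx : 0 ≤ x) (i : ι) (β : Fin k → ι) :
    T i β * ∏ l, x (β l) ≤ tapp T x i :=
  Finset.single_le_sum (f := fun γ => T i γ * ∏ l, x (γ l))
    (fun γ _ => mul_nonneg (hT i γ) (Finset.prod_nonneg fun l _ => hx (γ l)))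
    (Finset.mem_univ β)

lemma mul_apply_le_tapp (hT : TNonneg T) (hx : 1 ≤ x) (i : ι) (β : Fin k → ι) (l : Fin k) :
    T i β * x (β l) ≤ tapp T x i := by
  have hx₀ : 0 ≤ x := zero_le_one.trans hx
  have le_prod : x (β l) ≤ ∏ l, x (β l) := by
    rw [← Finset.mul_prod_erase Finset.univ (fun l => x (β l)) (Finset.mem_univ l)]
    exact le_mul_of_one_le_right (hx₀ (β l)) (Finset.one_le_prod fun l _ => hx (β l))
  exact (mul_le_mul_of_nonneg_left le_prod (hT i β)).trans (mul_prod_le_tapp hT hx₀ i β)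

end Tensor

section Eigenpair

variable {ι : Type*} [Fintype ι] {k : ℕ} {T : ι → (Fin k → ι) → ℝ} {lam mu : ℝ} {x y : ι → ℝ}

/-- `(lam, x)` is an eigenpair of `T`, of order `k + 1`, with `x` entrywise positive. -/
structure IsPosEigenpair (T : ι → (Fin k → ι) → ℝ) (lam : ℝ) (x : ι → ℝ) : Prop where
  pos : ∀ i, 0 < x i
  tapp_eq : ∀ i, tapp T x i = lam * x i ^ k

/-- `x` is an entrywise positive supersolution of the eigenvalue equation of `T` at level `lam`.
The levels admitting a supersolution are those used in the Collatz–Wielandt characterization of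
the positive eigenvalue. -/
structure IsPosSupersolution (T : ι → (Fin k → ι) → ℝ) (lam : ℝ) (x : ι → ℝ) : Prop where
  pos : ∀ i, 0 < x i
  tapp_le : ∀ i, tapp T x i ≤ lam * x i ^ k

/-- The indices at which the inequality defining a supersolution holds with equality. -/
def tightSet (T : ι → (Fin k → ι) → ℝ) (lam : ℝ) (x : ι → ℝ) : Set ι :=
  {i | tapp T x i = lam * x i ^ k}

namespace IsPosSupersolution

lemma mono (hx : IsPosSupersolution T lam x) (h : lam ≤ mu) : IsPosSupersolution T mu x where
  pos := hx.pos
  tapp_le i := (hx.tapp_le i).trans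
    (mul_le_mul_of_nonneg_right h (pow_nonneg (hx.pos i).le k))

lemma smul (hx : IsPosSupersolution T lam x) {c : ℝ} (hc : 0 < c) :
    IsPosSupersolution T lam (c • x) where
  pos i := mul_pos hc (hx.pos i)
  tapp_le i :=
    calc tapp T (c • x) i = c ^ k * tapp T x i := congrFun (tapp_smul T c x) i
      _ ≤ c ^ k * (lam * x i ^ k) := mul_le_mul_of_nonneg_left (hx.tapp_le i) (by positivity)
      _ = lam * (c * x i) ^ k := by ring

lemma level_nonneg [Nonempty ι] (hT : TNonneg T) (hx : IsPosSupersolution T lam x) :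
    0 ≤ lam := by
  obtain ⟨i⟩ := ‹Nonempty ι›
  have tapp_nonneg : 0 ≤ tapp T x i := Finset.sum_nonneg fun β _ =>
    mul_nonneg (hT i β) (Finset.prod_nonneg fun l _ => (hx.pos (β l)).le)
  exact nonneg_of_mul_nonneg_left (tapp_nonneg.trans (hx.tapp_le i)) (pow_pos (hx.pos i) k)

lemma exists_isLeast_range_one [Nonempty ι] (hx : IsPosSupersolution T lam x) :
    ∃ z, IsPosSupersolution T lam z ∧ IsLeast (Set.range z) 1 := by
  obtain ⟨c, hc, hcx, i, hi⟩ := exists_smul_le_touching (fun _ => one_pos) hx.pos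
  simp only [Pi.le_def, Pi.smul_apply, smul_eq_mul, mul_one] at hcx hi
  refine ⟨c⁻¹ • x, hx.smul (inv_pos.2 hc), ⟨i, ?_⟩, Set.forall_mem_range.2 fun j => ?_⟩
  · rw [Pi.smul_apply, smul_eq_mul, ← hi, inv_mul_cancel₀ hc.ne']
  · exact (le_inv_mul_iff₀ hc).2 ((mul_one c).trans_le (hcx j))

lemma exists_lt_level [Nonempty ι] (hx : IsPosSupersolution T lam x)
    (hempty : tightSet T lam x = ∅) : ∃ mu < lam, IsPosSupersolution T mu x := by
  have lt (i : ι) : tapp T x i / x i ^ k < lam :=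
    (div_lt_iff₀ (pow_pos (hx.pos i) k)).2
      ((hx.tapp_le i).lt_of_ne (Set.eq_empty_iff_forall_notMem.1 hempty i))
  obtain ⟨j, hj⟩ := Finite.exists_max fun i => tapp T x i / x i ^ k
  exact ⟨_, lt j, hx.pos, fun i => (div_le_iff₀ (pow_pos (hx.pos i) k)).1 (hj i)⟩

lemma exists_shrink_lt (hx : IsPosSupersolution T lam x) :
    ∃ d ∈ Set.Ioo (0 : ℝ) 1, ∀ i ∉ tightSet T lam x, tapp T x i < lam * (d * x i) ^ k := by
  have near_one : ∀ᶠ d in nhdsWithin (1 : ℝ) (Set.Iio 1),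
      ∀ i ∉ tightSet T lam x, tapp T x i < lam * (d * x i) ^ k := by
    refine Filter.eventually_all.2 fun i => Filter.eventually_imp_distrib_left.2 fun hi => ?_
    have hcont : Continuous fun d : ℝ => lam * (d * x i) ^ k := by fun_prop
    have hlt : tapp T x i < lam * (1 * x i) ^ k := by
      rw [one_mul]
      exact (hx.tapp_le i).lt_of_ne hi
    exact (hcont.continuousAt.eventually (lt_mem_nhds hlt)).filter_mono nhdsWithin_le_nhds
  obtain ⟨d, hd, hd01⟩ := (near_one.and (Ioo_mem_nhdsLT one_pos)).exists
  exact ⟨d, hd01, hd⟩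

end IsPosSupersolution

lemma IsPosEigenpair.isPosSupersolution (hx : IsPosEigenpair T lam x) :
    IsPosSupersolution T lam x :=
  ⟨hx.pos, fun i => (hx.tapp_eq i).le⟩

lemma IsPosEigenpair.smul (hx : IsPosEigenpair T lam x) {c : ℝ} (hc : 0 < c) :
    IsPosEigenpair T lam (c • x) where
  pos i := mul_pos hc (hx.pos i)
  tapp_eq i := by
    rw [tapp_smul, Pi.smul_apply, Pi.smul_apply, hx.tapp_eq, smul_eq_mul, smul_eq_mul]
    ring

lemma IsPosEigenpair.le_level [Nonempty ι] (hT : TNonneg T) (hx : IsPosEigenpair T lam x)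
    (hy : IsPosSupersolution T mu y) : lam ≤ mu := by
  obtain ⟨c, hc, hle, i, hi⟩ := exists_smul_le_touching hx.pos hy.pos
  have hcx := hx.smul hc
  refine le_of_mul_le_mul_right ?_ (pow_pos (hy.pos i) k)
  calc lam * y i ^ k = tapp T (c • x) i := by rw [hcx.tapp_eq, hi]
    _ ≤ tapp T y i := tapp_mono hT (fun j => (hcx.pos j).le) hle i
    _ ≤ mu * y i ^ k := hy.tapp_le i

end Eigenpair

section WeaklyIrreducible

variable {ι : Type*} [Fintype ι] [DecidableEq ι] {k : ℕ} {T : ι → (Fin k → ι) → ℝ}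
  {lam : ℝ} {x y : ι → ℝ}

lemma exists_pos_entry_leaving (hT : TNonneg T) (hwi : MatIrreducible (repMat T)) {I : Set ι}
    (hne : I.Nonempty) (huniv : I ≠ Set.univ) :
    ∃ i ∈ I, ∃ β, 0 < T i β ∧ ∃ l, β l ∉ I := by
  by_contra! hcon
  refine hwi ⟨I.toFinite.toFinset, by simpa using hne, by simpa using huniv,
    fun i hi j hj => Finset.sum_eq_zero fun β _ => ite_eq_right_iff.2 ?_⟩
  rw [Set.Finite.mem_toFinset] at hi hj
  rintro ⟨l, rfl⟩
  by_contra hβ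
  exact hj (hcon i hi β ((hT i β).lt_of_ne' hβ) l)

lemma exists_touching_tapp_lt (hT : TNonneg T) (hwi : MatIrreducible (repMat T))
    (hx : ∀ i, 0 < x i) (hxy : x ≤ y) (htouch : ∃ i, x i = y i) (hne : x ≠ y) :
    ∃ i, x i = y i ∧ tapp T x i < tapp T y i := by
  have huniv : {i | x i = y i} ≠ Set.univ := fun h => hne (funext (Set.eq_univ_iff_forall.1 h))
  obtain ⟨i, hi, β, hβ, l, hl⟩ := exists_pos_entry_leaving hT hwi htouch huniv
  exact ⟨i, hi, tapp_lt_tapp_s13 hT hx hxy hβ ((hxy (β l)).lt_of_ne hl)⟩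

lemma bddAbove_normalized_supersolutions (hT : TNonneg T) (hwi : MatIrreducible (repMat T))
    (C : ℝ) : BddAbove {x | IsPosSupersolution T C x ∧ IsLeast (Set.range x) 1} := by
  let X (i₀ : ι) : Set (ι → ℝ) := {x | IsPosSupersolution T C x ∧ 1 ≤ x ∧ x i₀ = 1}
  have bddAbove_X (i₀ : ι) : BddAbove (X i₀) := by
    rw [bddAbove_pi]
    suffices {i | BddAbove (Function.eval i '' X i₀)} = Set.univ from Set.eq_univ_iff_forall.1 this
    by_contra huniv
    have bdd_i₀ : BddAbove (Function.eval i₀ '' X i₀) :=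
      ⟨1, Set.forall_mem_image.2 fun x hx => hx.2.2.le⟩
    obtain ⟨i, ⟨A, hA⟩, β, hβ, l, hl⟩ := exists_pos_entry_leaving hT hwi ⟨i₀, bdd_i₀⟩ huniv
    refine hl ⟨|C| * A ^ k / T i β, Set.forall_mem_image.2 fun x hx => (le_div_iff₀' hβ).2 ?_⟩
    have hxA : x i ≤ A := hA (Set.mem_image_of_mem _ hx)
    have hx₀ : 0 ≤ x i := (hx.1.pos i).le
    calc T i β * x (β l) ≤ tapp T x i := mul_apply_le_tapp hT hx.2.1 i β l
      _ ≤ C * x i ^ k := hx.1.tapp_le i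
      _ ≤ |C| * A ^ k := by gcongr; exact le_abs_self C
  refine ((Set.finite_univ.bddAbove_biUnion).2 fun i _ => bddAbove_X i).mono ?_
  rintro x ⟨hx, ⟨i₀, hi₀⟩, hle⟩
  exact Set.mem_biUnion (Set.mem_univ i₀) ⟨hx, fun i => hle (Set.mem_range_self i), hi₀⟩

lemma exists_isLeast_supersolution_level [Nonempty ι] (hT : TNonneg T)
    (hwi : MatIrreducible (repMat T)) :
    ∃ lam, IsLeast {mu | ∃ x, IsPosSupersolution T mu x} lam := by
  obtain ⟨C, hC⟩ := Finite.exists_le (tapp T 1)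
  have one_super : IsPosSupersolution T C 1 := ⟨fun _ => one_pos, by simpa using hC⟩
  obtain ⟨A, hA⟩ := bddAbove_normalized_supersolutions hT hwi C
  let K : Set (ℝ × (ι → ℝ)) :=
    Set.Icc 0 C ×ˢ Set.Icc 1 A ∩ {p | ∀ i, tapp T p.2 i ≤ p.1 * p.2 i ^ k}
  have isCompact_K : IsCompact K := by
    refine (isCompact_Icc.prod isCompact_Icc).inter_right ?_
    simp only [Set.ofPred_forall]
    refine isClosed_iInter fun i => isClosed_le ?_ (by fun_prop)
    exact (continuous_apply i).comp ((continuous_tapp T).comp continuous_snd)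
  have mem_image {mu : ℝ} {x : ι → ℝ} (hx : IsPosSupersolution T mu x) (hmu : mu ≤ C) :
      mu ∈ Prod.fst '' K := by
    obtain ⟨z, hz, hz1⟩ := hx.exists_isLeast_range_one
    exact ⟨(mu, z), ⟨⟨⟨hx.level_nonneg hT, hmu⟩, fun i => hz1.2 (Set.mem_range_self i),
      hA ⟨hz.mono hmu, hz1⟩⟩, hz.tapp_le⟩, rfl⟩
  obtain ⟨lam, ⟨⟨_, x⟩, ⟨⟨hlam, hx⟩, hsup⟩, rfl⟩, hmin⟩ :=
    (isCompact_K.image continuous_fst).exists_isLeast ⟨C, mem_image one_super le_rfl⟩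
  refine ⟨_, ⟨x, fun i => one_pos.trans_le (hx.1 i), hsup⟩, ?_⟩
  rintro mu ⟨y, hy⟩
  rcases le_total mu C with hmu | hmu
  · exact hmin (mem_image hy hmu)
  · exact hlam.2.trans hmu

lemma IsPosSupersolution.exists_tightSet_ssubset (hT : TNonneg T)
    (hwi : MatIrreducible (repMat T)) (hx : IsPosSupersolution T lam x)
    (hne : (tightSet T lam x).Nonempty) (huniv : tightSet T lam x ≠ Set.univ) :
    ∃ z, IsPosSupersolution T lam z ∧ tightSet T lam z ⊂ tightSet T lam x := by
  classical
  obtain ⟨d, ⟨hd0, hd1⟩, hd⟩ := hx.exists_shrink_lt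
  set S := tightSet T lam x
  let z : ι → ℝ := S.piecewise x (d • x)
  have z_eq {i : ι} (hi : i ∈ S) : z i = x i := Set.piecewise_eq_of_mem _ _ _ hi
  have z_eq_mul {i : ι} (hi : i ∉ S) : z i = d * x i := Set.piecewise_eq_of_notMem _ _ _ hi
  have z_lt {i : ι} (hi : i ∉ S) : z i < x i :=
    (z_eq_mul hi).trans_lt (mul_lt_of_lt_one_left (hx.pos i) hd1)
  have z_pos (i : ι) : 0 < z i := by
    by_cases hi : i ∈ S
    · exact (hx.pos i).trans_eq (z_eq hi).symm
    · exact (mul_pos hd0 (hx.pos i)).trans_eq (z_eq_mul hi).symm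
  have z_le : z ≤ x := fun i => by
    by_cases hi : i ∈ S
    exacts [(z_eq hi).le, (z_lt hi).le]
  have tapp_z_le : tapp T z ≤ tapp T x := tapp_mono hT (fun i => (z_pos i).le) z_le
  have strict_off {i : ι} (hi : i ∉ S) : tapp T z i < lam * z i ^ k := by
    rw [z_eq_mul hi]
    exact (tapp_z_le i).trans_lt (hd i hi)
  obtain ⟨j, hj⟩ := (Set.ne_univ_iff_exists_notMem S).1 huniv
  obtain ⟨i, hi, hlt⟩ := exists_touching_tapp_lt hT hwi z_pos z_le
    (hne.imp fun _ => z_eq) fun h => (z_lt hj).ne (congrFun h j)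
  have strict_i : tapp T z i < lam * z i ^ k := hi ▸ hlt.trans_le (hx.tapp_le i)
  refine ⟨z, ⟨z_pos, fun i => ?_⟩, ?_⟩
  · by_cases hi : i ∈ S
    · exact z_eq hi ▸ (tapp_z_le i).trans (hx.tapp_le i)
    · exact (strict_off hi).le
  · refine (Set.ssubset_iff_of_subset fun l hl => ?_).2 ⟨i, ?_, strict_i.ne⟩
    · exact by_contra fun hlS => (strict_off hlS).ne hl
    · exact by_contra fun hiS => (z_lt hiS).ne hi

lemma IsPosSupersolution.exists_tightSet_eq_empty (hT : TNonneg T)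
    (hwi : MatIrreducible (repMat T)) (hx : IsPosSupersolution T lam x)
    (huniv : tightSet T lam x ≠ Set.univ) :
    ∃ z, IsPosSupersolution T lam z ∧ tightSet T lam z = ∅ := by
  obtain ⟨z, ⟨hz, hzuniv⟩, hmin⟩ := exists_minimalFor_of_wellFoundedLT
    (fun z => IsPosSupersolution T lam z ∧ tightSet T lam z ≠ Set.univ) (tightSet T lam)
    ⟨x, hx, huniv⟩
  refine ⟨z, hz, Set.not_nonempty_iff_eq_empty.1 fun hne => ?_⟩
  obtain ⟨w, hw, hwz⟩ := hz.exists_tightSet_ssubset hT hwi hne hzuniv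
  exact hwz.not_subset (hmin ⟨hw, (hwz.trans_subset (Set.subset_univ _)).ne⟩ hwz.subset)

lemma exists_isPosEigenpair [Nonempty ι] (hT : TNonneg T) (hwi : MatIrreducible (repMat T)) :
    ∃ lam x, IsPosEigenpair T lam x := by
  obtain ⟨lam, ⟨x, hx⟩, hmin⟩ := exists_isLeast_supersolution_level hT hwi
  suffices tightSet T lam x = Set.univ from ⟨lam, x, hx.pos, Set.eq_univ_iff_forall.1 this⟩
  by_contra huniv
  obtain ⟨z, hz, hempty⟩ := hx.exists_tightSet_eq_empty hT hwi huniv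
  obtain ⟨mu, hmu, hzmu⟩ := hz.exists_lt_level hempty
  exact hmu.not_ge (hmin ⟨z, hzmu⟩)

lemma IsPosEigenpair.eq_smul_of_supersolution [Nonempty ι] (hT : TNonneg T)
    (hwi : MatIrreducible (repMat T)) (hx : IsPosEigenpair T lam x)
    (hy : IsPosSupersolution T lam y) : ∃ c : ℝ, 0 < c ∧ y = c • x := by
  obtain ⟨c, hc, hle, htouch⟩ := exists_smul_le_touching hx.pos hy.pos
  have hcx := hx.smul hc
  refine ⟨c, hc, by_contra fun hne => ?_⟩
  obtain ⟨i, hi, hlt⟩ := exists_touching_tapp_lt hT hwi hcx.pos hle htouch (Ne.symm hne)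
  refine hlt.not_ge ?_
  calc tapp T y i ≤ lam * y i ^ k := hy.tapp_le i
    _ = tapp T (c • x) i := by rw [hcx.tapp_eq, hi]

theorem weakly_irreducible_unique_positive_eigenpair_general [Nonempty ι] (hT : TNonneg T)
    (hwi : MatIrreducible (repMat T)) :
    ∃ lam x, IsPosEigenpair T lam x ∧ ∀ mu y, IsPosEigenpair T mu y →
      mu = lam ∧ ∃ c : ℝ, 0 < c ∧ y = c • x := by
  obtain ⟨lam, x, hx⟩ := exists_isPosEigenpair hT hwi
  refine ⟨lam, x, hx, fun mu y hy => ?_⟩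
  obtain rfl : mu = lam := le_antisymm (hy.le_level hT hx.isPosSupersolution)
    (hx.le_level hT hy.isPosSupersolution)
  exact ⟨rfl, hx.eq_smul_of_supersolution hT hwi hy.isPosSupersolution⟩

end WeaklyIrreducible

theorem weakly_irreducible_unique_positive_eigenpair
    (m n : ℕ) (hm : 2 ≤ m) (hn : 2 ≤ n)
    (T : Fin n → (Fin (m - 1) → Fin n) → ℝ) (hT : TNonneg T)
    (hwi : MatIrreducible (repMat T)) :
    ∃ (lam : ℝ) (x : Fin n → ℝ), (∀ i, 0 < x i) ∧
      (∀ i, tapp T x i = lam * x i ^ (m - 1)) ∧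
      ∀ (mu : ℝ) (y : Fin n → ℝ), (∀ i, 0 < y i) →
        (∀ i, tapp T y i = mu * y i ^ (m - 1)) →
        mu = lam ∧ ∃ c : ℝ, 0 < c ∧ y = fun i => c * x i := by
  have : Nonempty (Fin n) := ⟨⟨0, by omega⟩⟩
  obtain ⟨lam, x, hx, huniq⟩ := weakly_irreducible_unique_positive_eigenpair_general hT hwi
  exact ⟨lam, x, hx.pos, hx.tapp_eq, fun mu y hy hmy => huniq mu y ⟨hy, hmy⟩⟩
end
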